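/- Let Ω₁ ⊂ ℝ^{n₁} satisfy Pólya's conjecture, Ω₂ ⊂ ℝ bounded open, n = n₁ + 1, and Ω a bounded open set with Ω ⊂ Ω₁ × Ω₂. Set k₀ = ⌊(|Ω|ω(n)/(2π)ⁿ)·[(1 − |Ω|/(|Ω₁||Ω₂|))^{−1} C₁(n₁)/|Ω₂|]ⁿ⌋ (with |Ω| < |Ω₁||Ω₂|). Then for every integer k with 0 ≤ k ≤ k₀, the k-th Dirichlet eigenvalue of Ω satisfies k ≤ (|Ω|ω(n)/(2π)ⁿ) λ_k(Ω)^{n/2}. -/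

import Mathlib

/-!
Write `ω(m)` for `ballVol m`. Separation of variables reduces counting eigenvalues of the product
`Ω₁ × Ω₂` below `Λ` to a sum, over `j ≥ 1`, of the Pólya bound for `Ω₁` at `Λ - (π j / L₂)²`. After
rescaling by `X = Λ (L₂ / π)²`, what is needed is a two-term bound for the lattice sum
`∑_{j ≥ 1} (X - j²)_+^a`, `a = n₁ / 2`, namely (`LatticeBound`)

  `∑_{j ≥ 1} (X - j²)_+^a ≤ (∫₀¹ (1 - t²)^a dt) X^{a + 1/2} - (1/5) (X - 9/256)_+^a`.

This form is stable under integration in `X`, which raises `a` by one (`LatticeBound.add_one`), so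
it suffices to treat `a = 1/2` and `a = 1`. For `a = 1` the sum is an explicit polynomial. For
`a = 1/2` the sum is compared with the area of a polygon inscribed in a quarter disc: each triangle
of the polygon with apex at the centre is smaller than its circular sector because `sin θ ≤ θ`
(`polygon_le_sector`). The shift `9/256` makes the bound true for small `X`, where the sum vanishes;
for `X ≥ 1` it costs a factor `(247/256)^a`, after which the second term still dominates the one
given by the constant `C₁(n₁)` (`ballCoef_mul_C₁_le`). Hence (`product_bound`)

  `N_{Ω₁×Ω₂}(Λ) ≤ T Λ^{n/2} (1 - C₁(n₁) / (L₂ √Λ))`, with `T = L₁ L₂ ω(n) / (2π)ⁿ`.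

Now let `v = V / (L₁ L₂)`, `R = (1 - v)⁻¹ C₁(n₁) / L₂` and `1 ≤ k ≤ k₀ ≤ T v Rⁿ`. If `√λ_k ≥ R`,
then `k ≤ T v Rⁿ ≤ T v λ_k^{n/2}`. If `√λ_k < R`, the factor `1 - C₁(n₁) / (L₂ √λ_k)` is at most
`v`, and the product bound gives `k ≤ T v λ_k^{n/2}`.
-/

open Real

/-- The volume of the unit ball in `ℝⁿ`: `ω(n) = π^{n/2}/Γ(1 + n/2)`. -/
noncomputable def ballVol (n : ℕ) : ℝ := π ^ ((n : ℝ) / 2) / Real.Gamma ((n : ℝ) / 2 + 1)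

/-- The Beta function `B(x,y) = Γ(x)Γ(y)/Γ(x+y)`. -/
noncomputable def betaFn (x y : ℝ) : ℝ :=
  Real.Gamma x * Real.Gamma y / Real.Gamma (x + y)

/-- The constant `C₁(n₁)` of Jiang–Lin. -/
noncomputable def C₁ (m : ℕ) : ℝ :=
  if m = 1 then 2 / 3
  else if m = 2 then 3 * π / 16
  else if m ≤ 4 then π * betaFn ((m : ℝ) / 2 - 1) 2 / (6 * betaFn ((m : ℝ) / 2 - 1) (5 / 2))
  else 3 * π * betaFn ((m : ℝ) / 2 - 1) 2 / (16 * betaFn ((m : ℝ) / 2 - 1) (5 / 2)) *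
    (247 / 256) ^ (((m : ℝ) - 2) / 2)

/-! ### Truncated powers and Gamma values -/

/-- `x ↦ (x - c)_+^{p+1}` is differentiable, also at the corner `x = c`, when `p > 0`. -/
lemma hasDerivAt_max_rpow (c p x : ℝ) (hp : 0 < p) :
    HasDerivAt (fun y : ℝ => (max (y - c) 0) ^ (p + 1)) ((p + 1) * (max (x - c) 0) ^ p) x := by
  rcases lt_trichotomy x c with h | h | h
  · have h1 : max (x - c) 0 = 0 := max_eq_right (by linarith)
    rw [h1, zero_rpow hp.ne', mul_zero]
    refine (hasDerivAt_const x (0 : ℝ)).congr_of_eventuallyEq ?_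
    filter_upwards [Iio_mem_nhds h] with y hy
    rw [max_eq_right (by simp only [Set.mem_Iio] at hy; linarith), zero_rpow (by linarith)]
  · subst h
    have h1 : max (x - x) 0 = (0 : ℝ) := by simp
    rw [h1, zero_rpow hp.ne', mul_zero, hasDerivAt_iff_tendsto_slope]
    -- the difference quotient at the corner is `(y - x)_+^p`
    have hc : Filter.Tendsto (fun y : ℝ => (max (y - x) 0) ^ p) (nhdsWithin x {x}ᶜ)
        (nhds 0) := by
      have : Continuous (fun y : ℝ => (max (y - x) 0) ^ p) :=
        Continuous.rpow_const (by fun_prop) (fun _ => Or.inr hp.le)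
      have h2 := this.tendsto x
      simp only [sub_self, max_self, zero_rpow hp.ne'] at h2
      exact h2.mono_left nhdsWithin_le_nhds
    refine hc.congr' ?_
    filter_upwards [self_mem_nhdsWithin] with y hy
    have hy' : y - x ≠ 0 := sub_ne_zero.mpr hy
    rw [slope_def_field, h1, zero_rpow (by linarith : p + 1 ≠ 0), sub_zero]
    rcases le_total (y - x) 0 with h3 | h3
    · rw [max_eq_right h3, zero_rpow hp.ne', zero_rpow (by linarith : p + 1 ≠ 0), zero_div]
    · have h4 : 0 < y - x := lt_of_le_of_ne h3 hy'.symm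
      rw [max_eq_left h3, rpow_add_one h4.ne']
      field_simp
  · have h1 : max (x - c) 0 = x - c := max_eq_left (by linarith)
    rw [h1]
    have h2 : HasDerivAt (fun y : ℝ => (y - c) ^ (p + 1)) (1 * (p + 1) * (x - c) ^ (p + 1 - 1)) x :=
      ((hasDerivAt_id x).sub_const c).rpow_const (Or.inl (by simp only [id]; linarith))
    have h3 : 1 * (p + 1) * (x - c) ^ (p + 1 - 1) = (p + 1) * (x - c) ^ p := by
      rw [one_mul, add_sub_cancel_right]
    rw [h3] at h2
    refine h2.congr_of_eventuallyEq ?_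
    filter_upwards [Ioi_mem_nhds h] with y hy
    rw [max_eq_left (by simp only [Set.mem_Ioi] at hy; linarith)]

/-- The Weyl coefficient of the lattice sum: `ballCoef a = ∫₀¹ (1 - t²)^a dt`, given by its closed
form in terms of the Gamma function. -/
noncomputable def ballCoef (a : ℝ) : ℝ := √π / 2 * Gamma (a + 1) / Gamma (a + 3 / 2)

lemma ballCoef_pos (a : ℝ) (ha : 0 < a) : 0 < ballCoef a := by
  have h1 : 0 < Gamma (a + 1) := Gamma_pos_of_pos (by linarith)
  have h2 : 0 < Gamma (a + 3 / 2) := Gamma_pos_of_pos (by linarith)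
  have := Real.pi_pos
  unfold ballCoef; positivity

lemma ballCoef_add_one (a : ℝ) (ha : 0 < a) :
    ballCoef (a + 1) = ballCoef a * (a + 1) / (a + 3 / 2) := by
  have h2 : 0 < Gamma (a + 3 / 2) := Gamma_pos_of_pos (by linarith)
  unfold ballCoef
  rw [show a + 1 + 3 / 2 = (a + 3 / 2) + 1 by ring, Gamma_add_one (by linarith : a + 1 ≠ 0),
    Gamma_add_one (by linarith : a + 3 / 2 ≠ 0)]
  field_simp

lemma gamma_three_halves : Gamma (3 / 2) = √π / 2 := by
  rw [show (3 / 2 : ℝ) = 1 / 2 + 1 by norm_num, Gamma_add_one (by norm_num), Gamma_one_half_eq]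
  ring

lemma gamma_five_halves : Gamma (5 / 2) = 3 * √π / 4 := by
  rw [show (5 / 2 : ℝ) = 3 / 2 + 1 by norm_num, Gamma_add_one (by norm_num), gamma_three_halves]
  ring

lemma ballCoef_half : ballCoef (1 / 2) = π / 4 := by
  unfold ballCoef
  norm_num only [Gamma_two]
  rw [gamma_three_halves]
  have := Real.mul_self_sqrt Real.pi_pos.le
  linear_combination this / 4

lemma ballCoef_one : ballCoef 1 = 2 / 3 := by
  unfold ballCoef
  norm_num only
  rw [gamma_five_halves, Gamma_two]
  have : 0 < √π := Real.sqrt_pos.mpr Real.pi_pos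
  field_simp
  norm_num

/-! ### The two-term lattice-sum bound -/

/-- The two-term lattice-sum bound
`∑_{j ≥ 1} (X - j²)_+^a ≤ (∫₀¹ (1 - t²)^a dt) X^{a + 1/2} - (1/5) (X - 9/256)_+^a`, for all `X ≥ 0`
(and all finite partial sums). -/
def LatticeBound (a : ℝ) : Prop :=
  ∀ (M : ℕ) (X : ℝ), 0 ≤ X →
    ∑ j ∈ Finset.range M, (max (X - ((j : ℝ) + 1) ^ 2) 0) ^ a ≤
      ballCoef a * X ^ (a + 1 / 2) - 1 / 5 * (max (X - 9 / 256) 0) ^ a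

/-- Integrating the bound in `X` raises the exponent by one, since every term is a multiple of a
power whose primitive is of the same shape. -/
lemma LatticeBound.add_one {a : ℝ} (ha : 0 < a) (h : LatticeBound a) : LatticeBound (a + 1) := by
  intro M X hX
  have ha1 : 0 < a + 1 := by linarith
  set G : ℝ → ℝ := fun y => ballCoef (a + 1) * y ^ (a + 1 + 1 / 2)
    - 1 / 5 * (max (y - 9 / 256) 0) ^ (a + 1)
    - ∑ j ∈ Finset.range M, (max (y - ((j : ℝ) + 1) ^ 2) 0) ^ (a + 1) with hG
  have hder : ∀ y : ℝ, HasDerivAt G (ballCoef (a + 1) * ((a + 1 + 1 / 2) * y ^ (a + 1 / 2))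
      - 1 / 5 * ((a + 1) * (max (y - 9 / 256) 0) ^ a)
      - ∑ j ∈ Finset.range M, (a + 1) * (max (y - ((j : ℝ) + 1) ^ 2) 0) ^ a) y := by
    intro y
    have h1 : HasDerivAt (fun y : ℝ => y ^ (a + 1 + 1 / 2))
        ((a + 1 + 1 / 2) * y ^ (a + 1 / 2)) y := by
      have := hasDerivAt_rpow_const (x := y) (p := a + 1 + 1 / 2) (Or.inr (by linarith))
      rwa [show a + 1 + 1 / 2 - 1 = a + 1 / 2 by ring] at this
    exact ((h1.const_mul _).sub ((hasDerivAt_max_rpow _ a y ha).const_mul _)).sub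
      (HasDerivAt.fun_sum fun j _ => hasDerivAt_max_rpow _ a y ha)
  have hmon : MonotoneOn G (Set.Ici 0) := by
    refine monotoneOn_of_deriv_nonneg (convex_Ici 0)
      (fun y _ => (hder y).continuousAt.continuousWithinAt)
      (fun y _ => (hder y).differentiableAt.differentiableWithinAt) ?_
    intro y hy
    rw [interior_Ici, Set.mem_Ioi] at hy
    rw [(hder y).deriv, ← Finset.mul_sum, ballCoef_add_one a ha]
    have h2 := h M y hy.le
    have h3 : ballCoef a * (a + 1) / (a + 3 / 2) * ((a + 1 + 1 / 2) * y ^ (a + 1 / 2))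
        = (a + 1) * (ballCoef a * y ^ (a + 1 / 2)) := by
      field_simp
      ring
    rw [h3]
    have := mul_le_mul_of_nonneg_left h2 ha1.le
    linarith
  have h0 : G 0 = 0 := by
    simp only [hG]
    rw [zero_rpow (by linarith : a + 1 + 1 / 2 ≠ 0),
      max_eq_right (by norm_num), zero_rpow ha1.ne', Finset.sum_eq_zero]
    · ring
    · intro j _
      rw [max_eq_right (by nlinarith [sq_nonneg ((j : ℝ) + 1)]), zero_rpow ha1.ne']
  have := hmon (Set.mem_Ici.mpr le_rfl) (Set.mem_Ici.mpr hX) hX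
  rw [h0] at this
  simp only [hG] at this
  linarith

/-- Only the terms `j < N` survive when `X ≤ (N + 1)²`. -/
lemma latticeSum_le (a : ℝ) (ha : 0 < a) (M N : ℕ) (X : ℝ) (hN : X ≤ ((N : ℝ) + 1) ^ 2) :
    ∑ j ∈ Finset.range M, (max (X - ((j : ℝ) + 1) ^ 2) 0) ^ a ≤
      ∑ j ∈ Finset.range N, (max (X - ((j : ℝ) + 1) ^ 2) 0) ^ a := by
  calc _ ≤ ∑ j ∈ Finset.range (max M N), (max (X - ((j : ℝ) + 1) ^ 2) 0) ^ a :=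
        Finset.sum_le_sum_of_subset_of_nonneg (Finset.range_mono (le_max_left _ _))
          (fun _ _ _ => rpow_nonneg (le_max_right _ _) _)
    _ = _ := by
        refine (Finset.sum_subset (Finset.range_mono (le_max_right _ _)) ?_).symm
        intro j _ hj
        have hj' : (N : ℝ) ≤ j := by
          exact_mod_cast not_lt.mp (fun h => hj (Finset.mem_range.mpr h))
        rw [max_eq_right _, zero_rpow ha.ne']
        have : (0 : ℝ) ≤ N := Nat.cast_nonneg N
        nlinarith

lemma latticeSum_eq_zero (a : ℝ) (ha : 0 < a) (M : ℕ) (X : ℝ) (hX : X ≤ 1) :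
    ∑ j ∈ Finset.range M, (max (X - ((j : ℝ) + 1) ^ 2) 0) ^ a ≤ 0 := by
  simpa using latticeSum_le a ha M 0 X (by simpa using hX)

lemma sum_sq_range (μ : ℝ) (N : ℕ) :
    ∑ j ∈ Finset.range N, (μ ^ 2 - ((j : ℝ) + 1) ^ 2)
      = N * μ ^ 2 - N * (N + 1) * (2 * N + 1) / 6 := by
  induction N with
  | zero => simp
  | succ k ih => rw [Finset.sum_range_succ, ih]; push_cast; ring

lemma latticeBound_one : LatticeBound 1 := by
  intro M X hX
  rw [ballCoef_one, rpow_one]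
  obtain ⟨μ, hμ, rfl⟩ : ∃ μ : ℝ, 0 ≤ μ ∧ X = μ ^ 2 := ⟨√X, sqrt_nonneg _, (sq_sqrt hX).symm⟩
  have h32 : (μ ^ 2) ^ (1 + 1 / 2 : ℝ) = μ ^ 3 := by
    rw [← rpow_natCast μ 2, ← rpow_mul hμ, ← rpow_natCast μ 3]; norm_num
  rw [h32]
  rcases le_total μ 1 with h1 | h1
  · have := latticeSum_eq_zero 1 one_pos M (μ ^ 2) (by nlinarith)
    refine this.trans ?_
    have : max (μ ^ 2 - 9 / 256) 0 ≤ 10 / 3 * μ ^ 3 := by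
      refine max_le ?_ (by positivity)
      nlinarith [mul_nonneg hμ (sq_nonneg (μ - 1 / 4)), sq_nonneg (μ - 1 / 4), sq_nonneg (μ - 1 / 5)]
    linarith
  · set N := ⌊μ⌋₊ with hNdef
    have hN1 : (N : ℝ) ≤ μ := Nat.floor_le hμ
    have hN2 : μ < N + 1 := Nat.lt_floor_add_one μ
    have hN0 : (1 : ℝ) ≤ N := by exact_mod_cast (Nat.one_le_floor_iff μ).mpr h1
    refine (latticeSum_le 1 one_pos M N (μ ^ 2) (by gcongr)).trans ?_
    have : ∑ j ∈ Finset.range N, (max (μ ^ 2 - ((j : ℝ) + 1) ^ 2) 0) ^ (1 : ℝ)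
        = ∑ j ∈ Finset.range N, (μ ^ 2 - ((j : ℝ) + 1) ^ 2) := by
      refine Finset.sum_congr rfl fun j hj => ?_
      have : (j : ℝ) + 1 ≤ N := by exact_mod_cast Finset.mem_range.mp hj
      rw [rpow_one, max_eq_left]
      have h0 : (0 : ℝ) ≤ j := Nat.cast_nonneg j
      nlinarith
    rw [this, sum_sq_range, max_eq_left (by nlinarith)]
    obtain ⟨t, ht⟩ : ∃ t : ℝ, t = μ - N := ⟨_, rfl⟩
    have hμt : μ = N + t := by linarith
    have ht0 : 0 ≤ t := by linarith
    have ht1 : t ≤ 1 := by linarith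
    rw [hμt]
    nlinarith [mul_nonneg (by linarith : (0 : ℝ) ≤ N) (sq_nonneg (t - 1 / 5)),
      mul_nonneg ht0 (sub_nonneg.mpr ht1), pow_nonneg ht0 3,
      mul_nonneg (sub_nonneg.mpr hN0) (sub_nonneg.mpr hN0)]

/-- Twice the area of the polygon inscribed in the disc of radius `μ` with vertices
`(j, √(μ² - j²))`, `0 ≤ j ≤ N`, together with the centre, is at most twice the area of the
circular sector containing it. -/
lemma polygon_le_sector (μ : ℝ) (hμ : 0 < μ) (N : ℕ) (hN : (N : ℝ) ≤ μ) :
    μ + 2 * ∑ j ∈ Finset.range N, √(μ ^ 2 - ((j : ℝ) + 1) ^ 2)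
        - (N + 1) * √(μ ^ 2 - (N : ℝ) ^ 2) ≤ μ ^ 2 * arcsin (N / μ) := by
  induction N with
  | zero => simp [sqrt_sq hμ.le]
  | succ k ih =>
    have hk : (k : ℝ) + 1 ≤ μ := by exact_mod_cast hN
    have hk0 : (0 : ℝ) ≤ k := Nat.cast_nonneg k
    have ih' := ih (by linarith)
    rw [Finset.sum_range_succ]
    push_cast
    set f := √(μ ^ 2 - (k : ℝ) ^ 2)
    set g := √(μ ^ 2 - ((k : ℝ) + 1) ^ 2)
    have hle : arcsin (k / μ) ≤ arcsin ((k + 1) / μ) := arcsin_le_arcsin (by gcongr; linarith)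
    have hsin := sin_le (sub_nonneg.mpr hle)
    have hcos : ∀ x : ℝ, √(1 - (x / μ) ^ 2) = √(μ ^ 2 - x ^ 2) / μ := by
      intro x
      rw [show 1 - (x / μ) ^ 2 = (μ ^ 2 - x ^ 2) / μ ^ 2 by field_simp,
        sqrt_div' _ (sq_nonneg μ), sqrt_sq hμ.le]
    have hk1 : (k : ℝ) / μ ≤ 1 := by rw [div_le_one hμ]; linarith
    have hk2 : ((k : ℝ) + 1) / μ ≤ 1 := by rw [div_le_one hμ]; linarith
    have hk3 : 0 ≤ (k : ℝ) / μ := by positivity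
    have hk4 : 0 ≤ ((k : ℝ) + 1) / μ := by positivity
    rw [sin_sub, cos_arcsin, cos_arcsin, sin_arcsin (by linarith) hk1,
      sin_arcsin (by linarith) hk2, hcos, hcos] at hsin
    have h2 := mul_le_mul_of_nonneg_left hsin (sq_nonneg μ)
    have h3 : μ ^ 2 * (((k : ℝ) + 1) / μ * (f / μ) - g / μ * (k / μ)) = (k + 1) * f - k * g := by
      field_simp
    rw [h3] at h2
    linarith

lemma latticeBound_half : LatticeBound (1 / 2) := by
  intro M X hX
  rw [ballCoef_half, show (1 / 2 + 1 / 2 : ℝ) = 1 by norm_num, rpow_one, ← sqrt_eq_rpow]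
  obtain ⟨μ, hμ, rfl⟩ : ∃ μ : ℝ, 0 ≤ μ ∧ X = μ ^ 2 := ⟨√X, sqrt_nonneg _, (sq_sqrt hX).symm⟩
  have hpi := Real.pi_gt_three
  rcases le_total μ 1 with h1 | h1
  · have := latticeSum_eq_zero (1 / 2) (by norm_num) M (μ ^ 2) (by nlinarith)
    refine this.trans ?_
    have : √(max (μ ^ 2 - 9 / 256) 0) ≤ 15 / 4 * μ ^ 2 := by
      refine sqrt_le_iff.mpr ⟨by positivity, max_le ?_ (by positivity)⟩
      nlinarith [sq_nonneg (μ ^ 2 - 9 / 128)]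
    nlinarith [sq_nonneg μ]
  · set N := ⌊μ⌋₊ with hNdef
    have hN1 : (N : ℝ) ≤ μ := Nat.floor_le hμ
    have hN2 : μ < N + 1 := Nat.lt_floor_add_one μ
    have hN0 : (1 : ℝ) ≤ N := by exact_mod_cast (Nat.one_le_floor_iff μ).mpr h1
    have hμ0 : 0 < μ := by linarith
    refine (latticeSum_le (1 / 2) (by norm_num) M N (μ ^ 2) (by gcongr)).trans ?_
    have : ∑ j ∈ Finset.range N, (max (μ ^ 2 - ((j : ℝ) + 1) ^ 2) 0) ^ (1 / 2 : ℝ)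
        = ∑ j ∈ Finset.range N, √(μ ^ 2 - ((j : ℝ) + 1) ^ 2) := by
      refine Finset.sum_congr rfl fun j hj => ?_
      have : (j : ℝ) + 1 ≤ N := by exact_mod_cast Finset.mem_range.mp hj
      rw [← sqrt_eq_rpow, max_eq_left]
      have h0 : (0 : ℝ) ≤ j := Nat.cast_nonneg j
      nlinarith
    rw [this]
    have hpoly := polygon_le_sector μ hμ0 N hN1
    set f := √(μ ^ 2 - (N : ℝ) ^ 2) with hf
    -- the last triangle, between the vertices with abscissae `N` and `μ`
    have hlast : μ * f ≤ μ ^ 2 * (π / 2 - arcsin (N / μ)) := by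
      have hx1 : (N : ℝ) / μ ≤ 1 := by rw [div_le_one hμ0]; linarith
      have h2 := sin_le (sub_nonneg.mpr (arcsin_le_pi_div_two (N / μ)))
      rw [sin_pi_div_two_sub, cos_arcsin,
        show 1 - ((N : ℝ) / μ) ^ 2 = (μ ^ 2 - N ^ 2) / μ ^ 2 by field_simp,
        sqrt_div' _ (sq_nonneg μ), sqrt_sq hμ] at h2
      have h3 := mul_le_mul_of_nonneg_left h2 (sq_nonneg μ)
      have h4 : μ ^ 2 * (f / μ) = μ * f := by field_simp
      linarith
    -- `(1 - d)² · 2d ≤ 8/27` for `d = μ - N ∈ [0, 1]`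
    have hcorr : (N + 1 - μ) * f ≤ 3 / 5 * μ := by
      obtain ⟨d, hd⟩ : ∃ d : ℝ, d = μ - N := ⟨_, rfl⟩
      have hd0 : 0 ≤ d := by linarith
      have hd1 : d ≤ 1 := by linarith
      have hf2 : f ^ 2 = d * (2 * μ - d) := by
        rw [hf, sq_sqrt (by nlinarith), hd]; ring
      refine abs_le_of_sq_le_sq' ?_ (by positivity) |>.2
      rw [show (N : ℝ) + 1 - μ = 1 - d by linarith, mul_pow, hf2]
      have h5 : (1 - d) ^ 2 * d ≤ 4 / 27 := by
        nlinarith [mul_nonneg (sq_nonneg (3 * d - 1)) (by linarith : (0 : ℝ) ≤ 4 - 3 * d)]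
      have h6 : (1 - d) ^ 2 * (d * (2 * μ - d)) ≤ (1 - d) ^ 2 * d * (2 * μ) := by
        nlinarith [mul_nonneg (sq_nonneg (1 - d)) (sq_nonneg d)]
      nlinarith [mul_le_mul_of_nonneg_right h5 (by linarith : (0 : ℝ) ≤ 2 * μ)]
    have hs : √(max (μ ^ 2 - 9 / 256) 0) ≤ μ :=
      sqrt_le_iff.mpr ⟨hμ, max_le (by linarith) (sq_nonneg μ)⟩
    nlinarith

lemma latticeBound_nat (m : ℕ) : LatticeBound (((m : ℝ) + 1) / 2) := by
  induction m using Nat.twoStepInduction with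
  | zero => simpa using latticeBound_half
  | one => simpa [show ((1 : ℝ) + 1) / 2 = 1 by norm_num] using latticeBound_one
  | more k ih _ =>
    have := LatticeBound.add_one (a := ((k : ℝ) + 1) / 2) (by positivity) ih
    rwa [show ((k : ℝ) + 1) / 2 + 1 = (((k + 2 : ℕ) : ℝ) + 1) / 2 by push_cast; ring] at this

/-! ### Comparison with the constant `C₁` -/

lemma betaFn_ratio (a : ℝ) (ha : 1 < a) :
    ballCoef a * (betaFn (a - 1) 2 / betaFn (a - 1) (5 / 2)) = 2 / 3 := by
  have h1 : 0 < Gamma (a - 1) := Gamma_pos_of_pos (by linarith)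
  have h2 : 0 < Gamma (a + 1) := Gamma_pos_of_pos (by linarith)
  have h3 : 0 < Gamma (a + 3 / 2) := Gamma_pos_of_pos (by linarith)
  have h4 : 0 < √π := Real.sqrt_pos.mpr Real.pi_pos
  unfold ballCoef betaFn
  rw [show a - 1 + 2 = a + 1 by ring, show a - 1 + 5 / 2 = a + 3 / 2 by ring, gamma_five_halves,
    Gamma_two]
  field_simp
  norm_num

/-- The constant `C₁(m)` is dominated by the boundary correction of the lattice-sum bound. -/
lemma ballCoef_mul_C₁_le (m : ℕ) (hm : 1 ≤ m) :
    ballCoef ((m : ℝ) / 2) * C₁ m / π ≤ 1 / 5 * (247 / 256 : ℝ) ^ ((m : ℝ) / 2) := by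
  have hpi := Real.pi_pos
  have hanti : ∀ {y z : ℝ}, z ≤ y → (247 / 256 : ℝ) ^ y ≤ (247 / 256 : ℝ) ^ z := fun h =>
    rpow_le_rpow_of_exponent_ge (by norm_num) (by norm_num) h
  unfold C₁
  split_ifs with h1 h2 h3
  · subst h1
    have := hanti (show ((1 : ℕ) : ℝ) / 2 ≤ 1 by norm_num)
    rw [rpow_one] at this
    rw [show ((1 : ℕ) : ℝ) / 2 = 1 / 2 by norm_num] at this ⊢
    rw [ballCoef_half, show π / 4 * (2 / 3) / π = 1 / 6 by field_simp; norm_num]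
    linarith
  · subst h2
    rw [show ((2 : ℕ) : ℝ) / 2 = 1 by norm_num, ballCoef_one, rpow_one,
      show 2 / 3 * (3 * π / 16) / π = 1 / 8 by field_simp; norm_num]
    norm_num
  · have hm3 : (3 : ℝ) ≤ m := by exact_mod_cast (by omega : 3 ≤ m)
    have hm4 : (m : ℝ) ≤ 4 := by exact_mod_cast h3
    have hb := betaFn_ratio ((m : ℝ) / 2) (by linarith)
    have := hanti (show (m : ℝ) / 2 ≤ (2 : ℕ) by push_cast; linarith)
    rw [rpow_natCast] at this
    set r := ballCoef ((m : ℝ) / 2)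
    have e : r * (π * betaFn ((m : ℝ) / 2 - 1) 2 / (6 * betaFn ((m : ℝ) / 2 - 1) (5 / 2))) / π
        = r * (betaFn ((m : ℝ) / 2 - 1) 2 / betaFn ((m : ℝ) / 2 - 1) (5 / 2)) / 6 := by
      rw [mul_comm (6 : ℝ)]
      field_simp
    rw [e, hb]
    norm_num at this ⊢
    linarith
  · have hm5 : (5 : ℝ) ≤ m := by exact_mod_cast (by omega : 5 ≤ m)
    have hb := betaFn_ratio ((m : ℝ) / 2) (by linarith)
    set r := ballCoef ((m : ℝ) / 2)
    have hq : (247 / 256 : ℝ) ^ ((m : ℝ) / 2) = (247 / 256) ^ (((m : ℝ) - 2) / 2) * (247 / 256) := by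
      rw [← rpow_add_one (by norm_num)]; congr 1; ring
    have hq0 : (0 : ℝ) < (247 / 256) ^ (((m : ℝ) - 2) / 2) := by positivity
    rw [hq]
    set s := (247 / 256 : ℝ) ^ (((m : ℝ) - 2) / 2)
    have e : r * (3 * π * betaFn ((m : ℝ) / 2 - 1) 2 / (16 * betaFn ((m : ℝ) / 2 - 1) (5 / 2)) * s)
        / π = r * (betaFn ((m : ℝ) / 2 - 1) 2 / betaFn ((m : ℝ) / 2 - 1) (5 / 2)) * (3 / 16) * s := by
      rw [mul_comm (16 : ℝ)]
      field_simp
    rw [e, hb]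
    nlinarith

/-- The lattice-sum bound with `C₁` as the constant in the second term. -/
lemma latticeSum_le_C₁ (m : ℕ) (hm : 1 ≤ m) (M : ℕ) (X : ℝ) (hX : 1 ≤ X) :
    ∑ j ∈ Finset.range M, (max (X - ((j : ℝ) + 1) ^ 2) 0) ^ ((m : ℝ) / 2) ≤
      ballCoef ((m : ℝ) / 2) * (X ^ ((m : ℝ) / 2) * (√X - C₁ m / π)) := by
  obtain ⟨l, rfl⟩ : ∃ l, m = l + 1 := ⟨m - 1, by omega⟩
  have h := latticeBound_nat l M X (by linarith)
  rw [show ((l : ℝ) + 1) / 2 = ((l + 1 : ℕ) : ℝ) / 2 by push_cast; ring] at h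
  have hc := ballCoef_mul_C₁_le (l + 1) hm
  set a := ((l + 1 : ℕ) : ℝ) / 2 with ha
  have ha0 : 0 < a := by rw [ha]; positivity
  have h1 : (247 / 256 : ℝ) ^ a * X ^ a ≤ (max (X - 9 / 256) 0) ^ a := by
    rw [← mul_rpow (by norm_num) (by linarith), max_eq_left (by linarith)]
    exact rpow_le_rpow (by linarith) (by linarith) ha0.le
  rw [rpow_add (by linarith), ← sqrt_eq_rpow] at h
  have h2 := mul_le_mul_of_nonneg_right hc (rpow_nonneg (by linarith : (0 : ℝ) ≤ X) a)
  have e : ballCoef a * (X ^ a * (√X - C₁ (l + 1) / π))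
    = ballCoef a * (X ^ a * √X) - ballCoef a * C₁ (l + 1) / π * X ^ a := by ring
  rw [e]
  linarith

lemma ballVol_pos (n : ℕ) : 0 < ballVol n := by
  have : 0 < Gamma ((n : ℝ) / 2 + 1) := Gamma_pos_of_pos (by positivity)
  have := Real.pi_pos
  unfold ballVol; positivity

/-- Slicing the unit ball: `ω(m + 1) = 2 ω(m) ∫₀¹ (1 - t²)^{m/2} dt`. -/
lemma ballVol_succ (m : ℕ) : ballVol (m + 1) = 2 * ballVol m * ballCoef ((m : ℝ) / 2) := by
  have h1 : 0 < Gamma ((m : ℝ) / 2 + 1) := Gamma_pos_of_pos (by positivity)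
  unfold ballVol ballCoef
  rw [show ((m + 1 : ℕ) : ℝ) / 2 + 1 = (m : ℝ) / 2 + 3 / 2 by push_cast; ring,
    show ((m + 1 : ℕ) : ℝ) / 2 = (m : ℝ) / 2 + 1 / 2 by push_cast; ring,
    rpow_add Real.pi_pos, ← sqrt_eq_rpow]
  field_simp

/-! ### Counting eigenvalues of a product -/

/-- A counting bound that vanishes as `Λ → 0⁺` forces all eigenvalues to be positive. -/
lemma pos_of_count_le (lam1 : ℕ → ℝ) (hfin1 : ∀ Λ : ℝ, {k : ℕ | lam1 k < Λ}.Finite)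
    (B a : ℝ) (ha : 0 < a)
    (hP : ∀ Λ : ℝ, 0 < Λ → (Nat.card {k : ℕ // lam1 k < Λ} : ℝ) ≤ B * Λ ^ a) (k : ℕ) :
    0 < lam1 k := by
  by_contra! hk
  have h1 : ∀ Λ : ℝ, 0 < Λ → 1 ≤ B * Λ ^ a := by
    intro Λ hΛ
    refine le_trans ?_ (hP Λ hΛ)
    have : Finite {k : ℕ // lam1 k < Λ} := hfin1 Λ
    have : Nonempty {k : ℕ // lam1 k < Λ} := ⟨⟨k, by linarith⟩⟩
    exact_mod_cast Nat.card_pos (α := {k : ℕ // lam1 k < Λ})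
  have h2 : Filter.Tendsto (fun Λ : ℝ => B * Λ ^ a) (nhdsWithin 0 (Set.Ioi 0)) (nhds 0) := by
    have hc : Continuous (fun Λ : ℝ => B * Λ ^ a) :=
      continuous_const.mul (continuous_id.rpow_const fun _ => Or.inr ha.le)
    have := hc.tendsto 0
    rw [zero_rpow ha.ne', mul_zero] at this
    exact this.mono_left nhdsWithin_le_nhds
  have h3 : (1 : ℝ) ≤ 0 := ge_of_tendsto h2 (by
    filter_upwards [self_mem_nhdsWithin] with Λ hΛ using h1 Λ hΛ)
  linarith

/-- Separation of variables: the eigenvalue sums below `Λ` are counted fibrewise over the second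
index, of which only finitely many values contribute. -/
lemma card_sum_lt_le (lam1 lam2 : ℕ → ℝ) (hfin1 : ∀ Λ : ℝ, {k : ℕ | lam1 k < Λ}.Finite)
    (B a c : ℝ) (ha : 0 < a) (hc : 0 < c)
    (hP : ∀ Λ : ℝ, 0 < Λ → (Nat.card {k : ℕ // lam1 k < Λ} : ℝ) ≤ B * Λ ^ a)
    (hlam2 : ∀ j : ℕ, c * ((j : ℝ) + 1) ^ 2 ≤ lam2 j) (Λ : ℝ) :
    ∃ M : ℕ, (Nat.card {q : ℕ × ℕ // lam1 q.1 + lam2 q.2 < Λ} : ℝ) ≤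
      B * ∑ j ∈ Finset.range M, (max (Λ - c * ((j : ℝ) + 1) ^ 2) 0) ^ a := by
  have hpos := pos_of_count_le lam1 hfin1 B a ha hP
  obtain ⟨M, hM⟩ := exists_nat_gt (Λ / c)
  rw [div_lt_iff₀ hc] at hM
  refine ⟨M, ?_⟩
  set s : ℕ → Finset ℕ := fun j => (hfin1 (Λ - c * ((j : ℝ) + 1) ^ 2)).toFinset with hs
  set T : Finset (ℕ × ℕ) := (Finset.range M).biUnion fun j => (s j) ×ˢ {j} with hT
  have hsub : {q : ℕ × ℕ | lam1 q.1 + lam2 q.2 < Λ} ⊆ (T : Set (ℕ × ℕ)) := by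
    rintro ⟨i, j⟩ hq
    simp only [Set.mem_ofPred_eq] at hq
    have h1 := hpos i
    have h2 := hlam2 j
    have hj0 : (0 : ℝ) ≤ j := Nat.cast_nonneg j
    have hj : j < M := by
      by_contra! hge
      have : (M : ℝ) ≤ j := by exact_mod_cast hge
      nlinarith [mul_le_mul_of_nonneg_left (show (M : ℝ) ≤ ((j : ℝ) + 1) ^ 2 by nlinarith) hc.le]
    simp only [hT, hs, Finset.coe_biUnion, Set.mem_iUnion, Finset.mem_coe, Finset.mem_product,
      Finset.mem_singleton, Finset.mem_range, Set.Finite.mem_toFinset, Set.mem_ofPred_eq]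
    exact ⟨j, hj, by linarith, rfl⟩
  have hcard : Nat.card {q : ℕ × ℕ // lam1 q.1 + lam2 q.2 < Λ} ≤
      ∑ j ∈ Finset.range M, (s j).card := by
    calc _ ≤ T.card := by
          have := Set.ncard_le_ncard hsub T.finite_toSet
          rwa [Set.ncard_coe_finset] at this
      _ ≤ ∑ j ∈ Finset.range M, ((s j) ×ˢ ({j} : Finset ℕ)).card := Finset.card_biUnion_le
      _ = _ := by simp
  calc (Nat.card {q : ℕ × ℕ // lam1 q.1 + lam2 q.2 < Λ} : ℝ)
      ≤ ∑ j ∈ Finset.range M, ((s j).card : ℝ) := by exact_mod_cast hcard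
    _ ≤ ∑ j ∈ Finset.range M, B * (max (Λ - c * ((j : ℝ) + 1) ^ 2) 0) ^ a := by
        refine Finset.sum_le_sum fun j _ => ?_
        rcases lt_or_ge 0 (Λ - c * ((j : ℝ) + 1) ^ 2) with h | h
        · rw [max_eq_left h.le]
          refine le_trans (le_of_eq ?_) (hP _ h)
          have := Nat.card_eq_card_finite_toFinset (hfin1 (Λ - c * ((j : ℝ) + 1) ^ 2))
          exact congrArg (Nat.cast (R := ℝ)) this.symm
        · have : s j = ∅ := by
            simp only [hs, Set.Finite.toFinset_eq_empty]
            ext i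
            have := hpos i
            simp only [Set.mem_ofPred_eq, Set.mem_empty_iff_false, iff_false, not_lt]
            linarith
          rw [this, max_eq_right h, zero_rpow ha.ne']
          simp
    _ = _ := by rw [Finset.mul_sum]

/-- The two-term bound for the product: either nothing lies below `Λ`, or `Λ` exceeds the
bottom `(π / L₂)²` of the second factor and the Weyl term improves by the factor
`1 - C₁ / (L₂ √Λ)`. -/
lemma product_bound (m : ℕ) (hm : 1 ≤ m) (L₁ L₂ : ℝ) (hL₁ : 0 < L₁) (hL₂ : 0 < L₂)
    (lam1 lam2 : ℕ → ℝ) (hfin1 : ∀ Λ : ℝ, {k : ℕ | lam1 k < Λ}.Finite)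
    (hP1 : ∀ Λ : ℝ, 0 < Λ → (Nat.card {k : ℕ // lam1 k < Λ} : ℝ) ≤
        L₁ * ballVol m / (2 * π) ^ m * Λ ^ ((m : ℝ) / 2))
    (hlam2 : ∀ k : ℕ, π ^ 2 * ((k : ℝ) + 1) ^ 2 / L₂ ^ 2 ≤ lam2 k) (Λ : ℝ)
    (hne : 0 < Nat.card {q : ℕ × ℕ // lam1 q.1 + lam2 q.2 < Λ}) :
    (π / L₂) ^ 2 < Λ ∧ (Nat.card {q : ℕ × ℕ // lam1 q.1 + lam2 q.2 < Λ} : ℝ) ≤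
      L₁ * L₂ * ballVol (m + 1) / (2 * π) ^ (m + 1) * Λ ^ (((m + 1 : ℕ) : ℝ) / 2) *
        (1 - C₁ m / (L₂ * √Λ)) := by
  have hpi := Real.pi_pos
  have hm0 : (0 : ℝ) < (m : ℝ) / 2 := by positivity
  have hc : 0 < (π / L₂) ^ 2 := by positivity
  have hw := ballVol_pos m
  set B := L₁ * ballVol m / (2 * π) ^ m with hB
  have hB0 : 0 < B := by positivity
  obtain ⟨M, hM⟩ := card_sum_lt_le lam1 lam2 hfin1 B ((m : ℝ) / 2) ((π / L₂) ^ 2) hm0 hc hP1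
    (fun j => by
      refine le_trans (le_of_eq ?_) (hlam2 j)
      field_simp) Λ
  obtain ⟨X, hX⟩ : ∃ X : ℝ, Λ = (π / L₂) ^ 2 * X := ⟨Λ / (π / L₂) ^ 2, by field_simp⟩
  have hscale : ∑ j ∈ Finset.range M, (max (Λ - (π / L₂) ^ 2 * ((j : ℝ) + 1) ^ 2) 0) ^ ((m : ℝ) / 2)
      = (π / L₂) ^ m *
        ∑ j ∈ Finset.range M, (max (X - ((j : ℝ) + 1) ^ 2) 0) ^ ((m : ℝ) / 2) := by
    rw [Finset.mul_sum]
    refine Finset.sum_congr rfl fun j _ => ?_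
    have h1 : max (Λ - (π / L₂) ^ 2 * ((j : ℝ) + 1) ^ 2) 0
        = (π / L₂) ^ 2 * max (X - ((j : ℝ) + 1) ^ 2) 0 := by
      rw [mul_max_of_nonneg _ _ hc.le, mul_zero, hX, mul_sub]
    have h2 : ((π / L₂) ^ 2) ^ ((m : ℝ) / 2) = (π / L₂) ^ m := by
      rw [← rpow_natCast (π / L₂) 2, ← rpow_mul (by positivity), ← rpow_natCast (π / L₂) m]
      congr 1; push_cast; ring
    rw [h1, mul_rpow hc.le (le_max_right _ _), h2]
  rw [hscale] at hM
  have hX1 : 1 < X := by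
    by_contra! hle
    have h1 := latticeSum_eq_zero ((m : ℝ) / 2) hm0 M X hle
    have h2 : (0 : ℝ) < Nat.card {q : ℕ × ℕ // lam1 q.1 + lam2 q.2 < Λ} := by exact_mod_cast hne
    have h3 : B * ((π / L₂) ^ m *
        ∑ j ∈ Finset.range M, (max (X - ((j : ℝ) + 1) ^ 2) 0) ^ ((m : ℝ) / 2)) ≤ 0 :=
      mul_nonpos_of_nonneg_of_nonpos hB0.le
        (mul_nonpos_of_nonneg_of_nonpos (by positivity) h1)
    linarith
  refine ⟨by rw [hX]; nlinarith, hM.trans ?_⟩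
  have hlat := latticeSum_le_C₁ m hm M X hX1.le
  have hX0 : 0 < X := by linarith
  have hsX : 0 < √X := Real.sqrt_pos.mpr hX0
  have hsΛ : √Λ = π / L₂ * √X := by
    rw [hX, sqrt_mul hc.le, sqrt_sq (by positivity)]
  have hpow : Λ ^ (((m + 1 : ℕ) : ℝ) / 2) = (π / L₂) ^ (m + 1) * (X ^ ((m : ℝ) / 2) * √X) := by
    rw [hX, mul_rpow hc.le hX0.le, ← rpow_natCast (π / L₂) 2, ← rpow_mul (by positivity),
      sqrt_eq_rpow, ← rpow_add hX0, ← rpow_natCast (π / L₂) (m + 1)]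
    congr 2 <;> (push_cast; ring)
  rw [hpow, hsΛ, ballVol_succ]
  calc _ ≤ B * ((π / L₂) ^ m * (ballCoef ((m : ℝ) / 2) * (X ^ ((m : ℝ) / 2) *
        (√X - C₁ m / π)))) := by gcongr
    _ = _ := by
        rw [hB, pow_succ, pow_succ]
        field_simp

lemma C₁_pos (m : ℕ) (hm : 1 ≤ m) : 0 < C₁ m := by
  have hpi := Real.pi_pos
  have hbeta : 2 < m → ∀ y : ℝ, 0 < y → 0 < betaFn ((m : ℝ) / 2 - 1) y := by
    intro h y hy
    have h' : (2 : ℝ) < m := by exact_mod_cast h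
    have h1 : 0 < Gamma ((m : ℝ) / 2 - 1) := Gamma_pos_of_pos (by linarith)
    have h2 : 0 < Gamma ((m : ℝ) / 2 - 1 + y) := Gamma_pos_of_pos (by linarith)
    have h3 := Gamma_pos_of_pos hy
    unfold betaFn; positivity
  unfold C₁
  split_ifs with h1 h2 h3
  · norm_num
  · positivity
  all_goals
    have hb := hbeta (by omega) 2 (by norm_num)
    have hb' := hbeta (by omega) (5 / 2) (by norm_num)
    positivity

/-- Let `Ω₁ ⊂ ℝ^{n₁}` satisfy Pólya's conjecture (eigenvalues
`lam1`, counting bound `hP1`), `Ω₂ ⊂ ℝ` bounded open of measure `L₂ > 0`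
(eigenvalues `lam2`, with `λ_j ≥ π²j²/L₂²`), `n = n₁ + 1`, and let `Ω` be a
bounded open subset of `Ω₁ × Ω₂` of measure `V > 0` with `V < L₁L₂`, whose
Dirichlet eigenvalues `lam` (increasing, `lam (k-1)` being `λ_k(Ω)`, finitely
many below any threshold) satisfy the domain monotonicity of counting functions
`N_Ω^D ≤ N_{Ω₁×Ω₂}^D`.  With
`k₀ = ⌊(V ω(n)/(2π)ⁿ)·((1 - V/(L₁L₂))⁻¹ C₁(n₁)/L₂)ⁿ⌋`, every `1 ≤ k ≤ k₀`
satisfies Pólya's inequality `k ≤ (V ω(n)/(2π)ⁿ) λ_k(Ω)^{n/2}`. -/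
theorem polya_first_k0_eigenvalues
    (n₁ n : ℕ) (hn₁ : 1 ≤ n₁) (hn : n = n₁ + 1)
    (L₁ L₂ V : ℝ) (hL₁pos : 0 < L₁) (hL₂pos : 0 < L₂)
    (hVpos : 0 < V) (hVlt : V < L₁ * L₂)
    (lam1 lam2 lam : ℕ → ℝ)
    (hmono1 : Monotone lam1) (hmono2 : Monotone lam2) (hmono : Monotone lam)
    (hfin1 : ∀ Λ : ℝ, {k : ℕ | lam1 k < Λ}.Finite)
    (hfin : ∀ Λ : ℝ, {k : ℕ | lam k < Λ}.Finite)
    (hP1 : ∀ Λ : ℝ, 0 < Λ →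
      (Nat.card {k : ℕ // lam1 k < Λ} : ℝ) ≤
        L₁ * ballVol n₁ / (2 * π) ^ n₁ * Λ ^ ((n₁ : ℝ) / 2))
    (hlam2 : ∀ k : ℕ, π ^ 2 * ((k : ℝ) + 1) ^ 2 / L₂ ^ 2 ≤ lam2 k)
    -- domain monotonicity of the counting functions, from `Ω ⊆ Ω₁ × Ω₂`
    (hmonoCount : ∀ Λ : ℝ,
      Nat.card {i : ℕ // lam i < Λ} ≤ Nat.card {q : ℕ × ℕ // lam1 q.1 + lam2 q.2 < Λ})
    (k₀ : ℕ)
    (hk₀ : k₀ = ⌊V * ballVol n / (2 * π) ^ n *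
        ((1 - V / (L₁ * L₂))⁻¹ * C₁ n₁ / L₂) ^ n⌋₊) :
    ∀ k : ℕ, 1 ≤ k → k ≤ k₀ →
      (k : ℝ) ≤ V * ballVol n / (2 * π) ^ n * lam (k - 1) ^ ((n : ℝ) / 2) := by
  subst hn
  intro k hk1 hk
  have hpi := Real.pi_pos
  have hw := ballVol_pos (n₁ + 1)
  set v := V / (L₁ * L₂) with hv
  have hL : 0 < L₁ * L₂ := mul_pos hL₁pos hL₂pos
  have hv0 : 0 < v := by positivity
  have hv1 : v < 1 := (div_lt_one hL).mpr hVlt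
  have hk1' : (1 : ℝ) ≤ k := by exact_mod_cast hk1
  set T := L₁ * L₂ * ballVol (n₁ + 1) / (2 * π) ^ (n₁ + 1) with hT
  have hT0 : 0 < T := by positivity
  have hW : V * ballVol (n₁ + 1) / (2 * π) ^ (n₁ + 1) = T * v := by
    rw [hT, hv]; field_simp
  rw [hW] at hk₀ ⊢
  set R := (1 - v)⁻¹ * C₁ n₁ / L₂ with hR
  have hkR : (k : ℝ) ≤ T * v * R ^ (n₁ + 1) :=
    (Nat.le_floor_iff' (by omega)).mp (hk₀ ▸ hk)
  set μ := lam (k - 1) with hμ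
  have key : ∀ Λ : ℝ, μ < Λ → (π / L₂) ^ 2 < Λ ∧
      (k : ℝ) ≤ T * Λ ^ (((n₁ + 1 : ℕ) : ℝ) / 2) * (1 - C₁ n₁ / (L₂ * √Λ)) := by
    intro Λ hΛ
    have hsub : (Finset.range k : Set ℕ) ⊆ {i : ℕ | lam i < Λ} := by
      intro i hi
      have hi' : i < k := by simpa using hi
      exact lt_of_le_of_lt (hmono (by omega)) hΛ
    have hcount := Set.ncard_le_ncard hsub (hfin Λ)
    rw [Set.ncard_coe_finset, Finset.card_range] at hcount
    have hle : k ≤ Nat.card {q : ℕ × ℕ // lam1 q.1 + lam2 q.2 < Λ} :=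
      hcount.trans (hmonoCount Λ)
    obtain ⟨h1, h2⟩ := product_bound n₁ hn₁ L₁ L₂ hL₁pos hL₂pos lam1 lam2 hfin1 hP1 hlam2 Λ
      (by omega)
    exact ⟨h1, le_trans (by exact_mod_cast hle) h2⟩
  have hμ0 : 0 < μ :=
    lt_of_lt_of_le (by positivity : 0 < (π / L₂) ^ 2)
      (le_of_forall_gt_imp_ge_of_dense fun Λ hΛ => (key Λ hΛ).1.le)
  have hsμ : 0 < √μ := Real.sqrt_pos.mpr hμ0
  -- the counting functions use strict inequalities, so the bound at `μ` itself is a limit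
  have hlim : (k : ℝ) ≤ T * μ ^ (((n₁ + 1 : ℕ) : ℝ) / 2) * (1 - C₁ n₁ / (L₂ * √μ)) := by
    have hcont : ContinuousAt (fun Λ : ℝ =>
        T * Λ ^ (((n₁ + 1 : ℕ) : ℝ) / 2) * (1 - C₁ n₁ / (L₂ * √Λ))) μ := by
      refine ContinuousAt.mul (continuousAt_const.mul
        (continuousAt_id.rpow_const (Or.inl hμ0.ne'))) (continuousAt_const.sub
          (continuousAt_const.div (continuousAt_const.mul continuous_sqrt.continuousAt) ?_))
      positivity
    refine ge_of_tendsto (hcont.tendsto.mono_left nhdsWithin_le_nhds :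
      Filter.Tendsto _ (nhdsWithin μ (Set.Ioi μ)) _) ?_
    filter_upwards [self_mem_nhdsWithin] with Λ hΛ using (key Λ hΛ).2
  have hpow0 : 0 < μ ^ (((n₁ + 1 : ℕ) : ℝ) / 2) := rpow_pos_of_pos hμ0 _
  rcases le_or_gt R (√μ) with h | h
  · have h1 : (0 : ℝ) < 1 - v := by linarith
    have hC := C₁_pos n₁ hn₁
    have hR0 : 0 < R := by positivity
    refine hkR.trans ?_
    have hpow : μ ^ (((n₁ + 1 : ℕ) : ℝ) / 2) = √μ ^ (n₁ + 1) := by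
      rw [sqrt_eq_rpow, ← rpow_natCast, ← rpow_mul hμ0.le]
      congr 1; ring
    rw [hpow]
    gcongr
  · refine hlim.trans ?_
    have h1 : (0 : ℝ) < 1 - v := by linarith
    have h2 : 1 - v ≤ C₁ n₁ / (L₂ * √μ) := by
      rw [le_div_iff₀ (by positivity)]
      have h3 : R * ((1 - v) * L₂) = C₁ n₁ := by
        rw [hR]; field_simp
      nlinarith [mul_le_mul_of_nonneg_right h.le (by positivity : 0 ≤ (1 - v) * L₂)]
    calc _ ≤ T * μ ^ (((n₁ + 1 : ℕ) : ℝ) / 2) * v := by gcongr; linarith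
      _ = _ := by ring
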